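/- For almost every α ∈ [0,1] (with respect to Lebesgue measure), the asymptotic frequency of the digit j ≥ 1 in the regular continued fraction expansion of α, i.e., lim_{n→∞} (1/n)·#{1 ≤ k ≤ n : a_k(α) = j}, exists and equals (1/log 2)·(2·log(1+j) − log j − log(2+j)). -/

import Mathlib

/-- The Gauss map `T_G(0) = 0`, `T_G(x) = {1/x}` for `x ≠ 0`. -/
noncomputable def gaussMap (x : ℝ) : ℝ := if x = 0 then 0 else Int.fract (1 / x)

/-!
Let `M n` be the maximum of the Birkhoff sums of `f` of length `≤ n`. Then
`M (n + 1) x - M n (T x)` is `max (-M n (T x)) (f x)`; its integral is nonnegative, and it tends to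
`f x` wherever the sums are unbounded above. So the sums are almost surely bounded above when
`∫ f < 0` and `T` is ergodic, and Birkhoff's theorem follows on applying this to
`f - b` and `-f - b` for suitable constants `b`.

For ergodicity, condition the Gauss measure on an invariant set of positive measure: the result is
stationary for the time-reversed Markov chain, which jumps from `y` to one of the points
`1 / (n + 1 + y)`. This chain maps decreasing functions on `[0, 1]` to increasing ones with at most
half the oscillation, so it has only one stationary law.
-/

open MeasureTheory Filter Set Topology ProbabilityTheory

section Lattice

variable {α G : Type*} [AddCommGroup G] [Lattice G] [IsOrderedAddMonoid G]

lemma partialSups_birkhoffSum_succ (T : α → α) (f : α → G) (n : ℕ) (x : α) :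
    partialSups (birkhoffSum T f) (n + 1) x =
      0 ⊔ (f x + partialSups (birkhoffSum T f) n (T x)) := by
  induction n with
  | zero => rw [partialSups_add_one, partialSups_zero]; simp
  | succ n ih =>
    rw [partialSups_add_one, Pi.sup_apply, ih, partialSups_add_one (birkhoffSum T f) n,
      Pi.sup_apply, birkhoffSum_succ', sup_assoc, add_sup]

lemma bddAbove_range_birkhoffSum_apply_iff (T : α → α) (f : α → G) (x : α) :
    BddAbove (range fun n => birkhoffSum T f n (T x)) ↔
      BddAbove (range fun n => birkhoffSum T f n x) := by
  simp only [bddAbove_def, forall_mem_range]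
  constructor
  · rintro ⟨C, hC⟩
    refine ⟨0 ⊔ (f x + C), fun n => ?_⟩
    cases n with
    | zero => simp
    | succ n =>
      rw [birkhoffSum_succ']
      exact le_sup_of_le_right (by gcongr; exact hC n)
  · rintro ⟨C, hC⟩
    refine ⟨-f x + C, fun n => le_neg_add_iff_add_le.2 ?_⟩
    rw [← birkhoffSum_succ']
    exact hC (n + 1)

end Lattice

section Birkhoff

variable {α : Type*} {T : α → α} {f : α → ℝ}
variable [MeasurableSpace α] {μ : Measure α}

lemma integrable_birkhoffSum (hT : MeasurePreserving T μ μ) (hf : Integrable f μ) (n : ℕ) :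
    Integrable (birkhoffSum T f n) μ :=
  integrable_finsetSum _ fun k _ => (hT.iterate k).integrable_comp_of_integrable hf

lemma measurable_birkhoffSum (hT : Measurable T) (hf : Measurable f) (n : ℕ) :
    Measurable (birkhoffSum T f n) :=
  Finset.measurable_sum _ fun k _ => hf.comp (hT.iterate k)

lemma integrable_partialSups {F : ℕ → α → ℝ} (hF : ∀ n, Integrable (F n) μ) (n : ℕ) :
    Integrable (partialSups F n) μ := by
  induction n with
  | zero => simpa using hF 0
  | succ n ih => rw [partialSups_add_one]; exact ih.sup (hF (n + 1))

lemma tendsto_integral_neg_sup_of_tendsto_atTop {M : ℕ → α → ℝ}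
    (hMm : ∀ n, AEStronglyMeasurable (M n) μ) (hM0 : ∀ n x, 0 ≤ M n x)
    (hM : ∀ᵐ x ∂μ, Tendsto (fun n => M n x) atTop atTop) (hf : Integrable f μ) :
    Tendsto (fun n => ∫ x, -M n x ⊔ f x ∂μ) atTop (𝓝 (∫ x, f x ∂μ)) := by
  refine tendsto_integral_of_dominated_convergence (fun x => |f x|)
    (fun n => (hMm n).neg.sup hf.1) hf.abs (fun n => ae_of_all _ fun x => abs_le.2 ⟨?_, ?_⟩) ?_
  · exact le_sup_of_le_right (neg_abs_le _)
  · exact sup_le ((neg_nonpos.2 (hM0 n x)).trans (abs_nonneg _)) (le_abs_self _)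
  · filter_upwards [hM] with x hx
    refine tendsto_const_nhds.congr' ?_
    filter_upwards [hx.eventually_ge_atTop (-f x)] with n hn
    exact (sup_eq_right.2 (neg_le.1 hn)).symm

theorem integral_nonneg_of_ae_not_bddAbove_birkhoffSum (hT : MeasurePreserving T μ μ)
    (hf : Integrable f μ)
    (hunbdd : ∀ᵐ x ∂μ, ¬ BddAbove (range fun n => birkhoffSum T f n x)) :
    0 ≤ ∫ x, f x ∂μ := by
  set M : ℕ → α → ℝ := ⇑(partialSups (birkhoffSum T f))
  have hM (n : ℕ) : Integrable (M n) μ := integrable_partialSups (integrable_birkhoffSum hT hf) n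
  have hMT (n : ℕ) : Integrable (fun x => M n (T x)) μ := hT.integrable_comp_of_integrable (hM n)
  have hM0 (n : ℕ) (x : α) : 0 ≤ M n x := by
    simpa using le_partialSups_of_le (birkhoffSum T f) n.zero_le x
  have hMmono : Monotone M := partialSups_monotone _
  have hMtop : ∀ᵐ x ∂μ, Tendsto (fun n => M n (T x)) atTop atTop := by
    filter_upwards [hunbdd] with x hx
    refine tendsto_atTop_atTop_of_monotone' (fun m n h => hMmono h (T x)) ?_
    simpa only [M, Pi.partialSups_apply, bddAbove_range_partialSups,
      bddAbove_range_birkhoffSum_apply_iff] using hx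
  have hincr (n : ℕ) (x : α) : M (n + 1) x - M n (T x) = -M n (T x) ⊔ f x := by
    have hsucc : M (n + 1) x = 0 ⊔ (f x + M n (T x)) := partialSups_birkhoffSum_succ T f n x
    rw [hsucc, ← max_sub_sub_right, zero_sub, add_sub_cancel_right]
  refine ge_of_tendsto' (tendsto_integral_neg_sup_of_tendsto_atTop
    (fun n => (hMT n).aestronglyMeasurable) (fun n x => hM0 n (T x)) hMtop hf) fun n => ?_
  calc 0 ≤ ∫ x, M (n + 1) x ∂μ - ∫ x, M n x ∂μ :=
        sub_nonneg.2 (integral_mono (hM _) (hM _) (hMmono n.le_succ))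
    _ = ∫ x, M (n + 1) x ∂μ - ∫ x, M n (T x) ∂μ := by
        rw [← integral_map hT.aemeasurable (by rw [hT.map_eq]; exact (hM n).1), hT.map_eq]
    _ = ∫ x, -M n (T x) ⊔ f x ∂μ := by
        simp_rw [← hincr]
        exact (integral_sub (hM _) (hMT n)).symm

theorem ae_bddAbove_birkhoffSum_of_integral_neg (hT : Ergodic T μ) (hf : Integrable f μ)
    (hneg : ∫ x, f x ∂μ < 0) : ∀ᵐ x ∂μ, BddAbove (range fun n => birkhoffSum T f n x) := by
  wlog hfm : Measurable f generalizing f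
  · have hmk : f =ᵐ[μ] hf.1.mk f := hf.1.ae_eq_mk
    have hsum := ae_all_iff.2 (hT.quasiMeasurePreserving.birkhoffSum_ae_eq_of_ae_eq hmk)
    filter_upwards [this (hf.congr hmk) (integral_congr_ae hmk ▸ hneg)
      hf.1.stronglyMeasurable_mk.measurable, hsum] with x hx hxsum
    simpa only [hxsum] using hx
  have hinv : T ⁻¹' {x | BddAbove (range fun n => birkhoffSum T f n x)} =
      {x | BddAbove (range fun n => birkhoffSum T f n x)} := by
    ext x
    exact bddAbove_range_birkhoffSum_apply_iff T f x
  refine (hT.ae_mem_or_ae_notMem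
    (measurableSet_bddAbove_range (measurable_birkhoffSum hT.measurable hfm)) hinv).resolve_right
    fun hunbdd => hneg.not_ge
      (integral_nonneg_of_ae_not_bddAbove_birkhoffSum hT.toMeasurePreserving hf hunbdd)

variable [IsProbabilityMeasure μ]

theorem ae_eventually_birkhoffAverage_lt (hT : Ergodic T μ) (hf : Integrable f μ) {c : ℝ}
    (hc : ∫ x, f x ∂μ < c) : ∀ᵐ x ∂μ, ∀ᶠ n in atTop, birkhoffAverage ℝ T f n x < c := by
  obtain ⟨b, hfb, hbc⟩ := exists_between hc
  have hneg : ∫ x, (f x - b) ∂μ < 0 := by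
    rw [integral_sub hf (integrable_const b)]
    simpa using hfb
  filter_upwards [ae_bddAbove_birkhoffSum_of_integral_neg hT (hf.sub (integrable_const b)) hneg]
    with x ⟨C, hC⟩
  have hlim : Tendsto (fun n : ℕ => C / n + b) atTop (𝓝 b) := by
    simpa using (tendsto_const_div_atTop_nhds_zero_nat C).add_const b
  filter_upwards [hlim.eventually_lt_const hbc, eventually_gt_atTop 0] with n hn hn0
  refine lt_of_le_of_lt ?_ hn
  have hn0' : (0 : ℝ) < n := by exact_mod_cast hn0
  have hsum : birkhoffSum T f n x - n * b ≤ C := by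
    simpa [birkhoffSum] using hC (mem_range_self n)
  rw [birkhoffAverage, smul_eq_mul, inv_mul_eq_div, ← sub_le_iff_le_add, div_sub' hn0'.ne']
  gcongr

theorem ae_tendsto_birkhoffAverage_of_ergodic (hT : Ergodic T μ) (hf : Integrable f μ) :
    ∀ᵐ x ∂μ, Tendsto (fun n => birkhoffAverage ℝ T f n x) atTop (𝓝 (∫ x, f x ∂μ)) := by
  have hupper {g : α → ℝ} (hg : Integrable g μ) : ∀ᵐ x ∂μ, ∀ q : ℚ, ∫ x, g x ∂μ < q →
      ∀ᶠ n in atTop, birkhoffAverage ℝ T g n x < q :=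
    ae_all_iff.2 fun q => eventually_imp_distrib_left.2 (ae_eventually_birkhoffAverage_lt hT hg)
  filter_upwards [hupper hf, hupper hf.neg] with x hx hxneg
  refine tendsto_order.2 ⟨fun a ha => ?_, fun a ha => ?_⟩
  · obtain ⟨q, hq, hqa⟩ := exists_rat_btwn (neg_lt_neg ha)
    have hq' : ∫ x, (-f) x ∂μ < q := by simpa only [Pi.neg_apply, integral_neg] using hq
    filter_upwards [hxneg q hq'] with n hn
    rw [birkhoffAverage_neg] at hn
    exact neg_lt_neg_iff.1 (hn.trans hqa)
  · obtain ⟨q, hq, hqa⟩ := exists_rat_btwn ha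
    exact (hx q hq).mono fun n hn => hn.trans hqa

end Birkhoff

section TimeReversal

variable {α : Type*} [MeasurableSpace α] {T : α → α} {μ : Measure α} {κ : Kernel α α}

/-- The Markov kernel `κ` is the time reversal of the stationary process `x, T x, T (T x), …` with
initial law `μ`: it maps `y` to the conditional law of `x` given `T x = y`. All conditions on the
points of `α` are imposed only `μ`-almost everywhere. -/
structure IsTimeReversal (κ : Kernel α α) (T : α → α) (μ : Measure α) : Prop where
  invariant : κ.Invariant μ
  ae_isProbabilityMeasure : ∀ᵐ y ∂μ, IsProbabilityMeasure (κ y)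
  ae_map_eq : ∀ᵐ y ∂μ, ∀ᵐ x ∂κ y, T x = y

namespace IsTimeReversal

lemma bind_restrict (h : IsTimeReversal κ T μ) (hT : Measurable T) {A : Set α}
    (hA : MeasurableSet A) : (μ.restrict A).bind κ = μ.restrict (T ⁻¹' A) := by
  ext B hB
  have hκ : ∀ᵐ y ∂μ, κ y (B ∩ T ⁻¹' A) = A.indicator (fun y => κ y B) y := by
    filter_upwards [h.ae_map_eq] with y hy
    by_cases hyA : y ∈ A
    · rw [indicator_of_mem hyA]
      exact measure_congr (inter_ae_eq_left_of_ae_eq_univ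
        (eventuallyEq_univ.2 (hy.mono fun x hx => (hx.symm ▸ hyA : T x ∈ A))))
    · rw [indicator_of_notMem hyA, measure_eq_zero_iff_ae_notMem]
      filter_upwards [hy] with x hx hxA
      exact hyA (hx ▸ hxA.2)
  rw [Measure.bind_apply hB κ.aemeasurable, Measure.restrict_apply hB, ← lintegral_indicator hA,
    ← lintegral_congr_ae hκ, ← Measure.bind_apply (hB.inter (hT hA)) κ.aemeasurable, h.invariant]

lemma measurePreserving (h : IsTimeReversal κ T μ) (hT : Measurable T) :
    MeasurePreserving T μ μ := by
  refine ⟨hT, Measure.ext fun A hA => ?_⟩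
  rw [Measure.map_apply hT hA, ← Measure.restrict_apply_univ, ← h.bind_restrict hT hA,
    Measure.bind_apply .univ κ.aemeasurable, ← setLIntegral_one]
  refine setLIntegral_congr_fun_ae hA ?_
  filter_upwards [h.ae_isProbabilityMeasure] with y hy _
  exact hy.measure_univ

theorem ergodic [IsProbabilityMeasure μ] (h : IsTimeReversal κ T μ) (hT : Measurable T)
    (huniq : ∀ ν : Measure α, IsProbabilityMeasure ν → ν ≪ μ → κ.Invariant ν → ν = μ) :
    Ergodic T μ := by
  refine { h.measurePreserving hT with aeconst_set := fun A hA hTA => ?_ }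
  rw [eventuallyConst_set']
  by_cases hA0 : μ A = 0
  · exact Or.inl (ae_eq_empty.2 hA0)
  have hinv : κ.Invariant μ[|A] := by
    rw [Kernel.Invariant, ProbabilityTheory.cond, Measure.bind_smul, h.bind_restrict hT hA, hTA]
  have hcond : μ[|A] = μ :=
    huniq _ (cond_isProbabilityMeasure hA0) cond_absolutelyContinuous hinv
  refine Or.inr (ae_eq_univ.2 ?_)
  rw [← hcond, cond_apply hA, inter_compl_self, measure_empty, mul_zero]

end IsTimeReversal

lemma integral_integral_of_invariant {E : Type*} [NormedAddCommGroup E] [NormedSpace ℝ E]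
    {f : α → E} (hκ : κ.Invariant μ) (hf : Integrable f μ) :
    ∫ y, ∫ x, f x ∂κ y ∂μ = ∫ x, f x ∂μ := by
  have h := Kernel.integral_comp (κ := Kernel.const Unit μ) (η := κ) (a := ()) (f := f)
  rw [Kernel.comp_const, hκ.def, Kernel.const_apply] at h
  exact (h hf).symm

end TimeReversal

namespace GaussMap

/-- The inverse branch `y ↦ 1 / (n + 1 + y)` of the Gauss map, onto the numbers whose first
continued fraction digit is `n + 1`. -/
noncomputable def branch (n : ℕ) (y : ℝ) : ℝ := 1 / (n + 1 + y)

/-- The set of numbers `x` whose first continued fraction digit `⌊1 / x⌋` is `j`. -/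
def firstDigitSet (j : ℕ) : Set ℝ := {x | ⌊1 / x⌋ = (j : ℤ)}

lemma mem_firstDigitSet {j : ℕ} {x : ℝ} : x ∈ firstDigitSet j ↔ ⌊1 / x⌋ = (j : ℤ) := Iff.rfl

/-- The density `1 / (log 2 * (1 + x))` of the Gauss measure. -/
noncomputable def density (x : ℝ) : ℝ := (Real.log 2 * (1 + x))⁻¹

/-- The Gauss measure, as a measure on `ℝ` concentrated on `[0, 1)`. -/
noncomputable def gaussMeasure : Measure ℝ :=
  (volume.restrict (Ico 0 1)).withDensity fun x => ENNReal.ofReal (density x)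

/-- The probability that, for `x` distributed according to the Gauss measure, `x = branch n y`
given that `gaussMap x = y`; meaningful for `0 ≤ y`. -/
noncomputable def weight (n : ℕ) (y : ℝ) : ℝ := (1 + y) / ((n + 1 + y) * (n + 2 + y))

lemma measurable_branch (n : ℕ) : Measurable (branch n) := by
  unfold branch; fun_prop

lemma measurable_weight (n : ℕ) : Measurable (weight n) := by
  unfold weight; fun_prop

lemma measurable_density : Measurable density := by
  unfold density; fun_prop

lemma measurable_gaussMap : Measurable gaussMap :=
  Measurable.ite (measurableSet_singleton 0) measurable_const (measurable_fract.comp (by fun_prop))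

lemma measurableSet_firstDigitSet (j : ℕ) : MeasurableSet (firstDigitSet j) :=
  (Int.measurable_floor.comp (by fun_prop : Measurable fun x : ℝ => 1 / x))
    (measurableSet_singleton (j : ℤ))

/-- The Markov kernel that moves `y` to `branch n y` with probability `weight n y`. For `y < 0`
it is a junk value, and not a probability measure in general. -/
noncomputable def reversedKernel : Kernel ℝ ℝ where
  toFun y := Measure.sum fun n => ENNReal.ofReal (weight n y) • Measure.dirac (branch n y)
  measurable' := by
    refine Measure.measurable_of_measurable_coe _ fun s hs => ?_
    simp only [Measure.sum_apply _ hs, Measure.smul_apply, smul_eq_mul]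
    exact Measurable.tsum fun n => (measurable_weight n).ennreal_ofReal.mul
      ((Measure.measurable_coe hs).comp (Measure.measurable_dirac.comp (measurable_branch n)))

lemma reversedKernel_apply (y : ℝ) : reversedKernel y =
    Measure.sum fun n => ENNReal.ofReal (weight n y) • Measure.dirac (branch n y) := rfl

section Branches

variable {y : ℝ}

lemma branch_pos (n : ℕ) (hy : 0 ≤ y) : 0 < branch n y := by
  unfold branch; positivity

lemma branch_mem_Icc (n : ℕ) (hy : 0 ≤ y) : branch n y ∈ Icc (0 : ℝ) 1 := by
  refine ⟨(branch_pos n hy).le, div_le_one_of_le₀ ?_ (by positivity)⟩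
  linarith [(n.cast_nonneg : (0 : ℝ) ≤ n)]

lemma one_div_branch (n : ℕ) (y : ℝ) : 1 / branch n y = y + (n + 1 : ℕ) := by
  rw [branch, one_div_one_div]
  push_cast
  ring

lemma gaussMap_branch (n : ℕ) (hy : y ∈ Ico (0 : ℝ) 1) : gaussMap (branch n y) = y := by
  rw [gaussMap, if_neg (branch_pos n hy.1).ne', one_div_branch, Int.fract_add_natCast,
    Int.fract_eq_self.2 hy]

lemma image_branch (n : ℕ) : branch n '' Ico 0 1 = firstDigitSet (n + 1) := by
  ext x
  constructor
  · rintro ⟨y, hy, rfl⟩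
    rw [mem_firstDigitSet, one_div_branch, Int.floor_add_natCast,
      Int.floor_eq_zero_iff.2 hy, zero_add]
  · intro hx
    refine ⟨Int.fract (1 / x), ⟨Int.fract_nonneg _, Int.fract_lt_one _⟩, ?_⟩
    rw [branch, ← Nat.cast_succ, ← Int.cast_natCast, ← hx, Int.floor_add_fract, one_div_one_div]

lemma pairwise_disjoint_firstDigitSet : Pairwise (Function.onFun Disjoint firstDigitSet) :=
  fun _ _ hij => disjoint_left.2 fun _ hi hj => hij (Int.ofNat.inj (hi.symm.trans hj))

lemma iUnion_firstDigitSet_succ : ⋃ n, firstDigitSet (n + 1) = Ioc (0 : ℝ) 1 := by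
  ext x
  rw [mem_iUnion, mem_Ioc, ← one_le_inv_iff₀, ← one_div, ← Int.floor_pos]
  constructor
  · rintro ⟨n, hn⟩
    rw [mem_firstDigitSet.1 hn]
    positivity
  · exact Int.eq_succ_of_zero_lt

lemma firstDigitSet_eq_Ioc {j : ℕ} (hj : j ≠ 0) :
    firstDigitSet j = Ioc (1 / ((j : ℝ) + 1)) (1 / j) := by
  have hj0 : (0 : ℝ) < j := by exact_mod_cast hj.bot_lt
  ext x
  rw [mem_firstDigitSet, Int.floor_eq_iff, Int.cast_natCast, mem_Ioc]
  constructor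
  · rintro ⟨hle, hlt⟩
    have hx : 0 < x := one_div_pos.1 (hj0.trans_le hle)
    exact ⟨(one_div_lt (by positivity) hx).2 hlt, (le_one_div hx hj0).2 hle⟩
  · rintro ⟨hlt, hle⟩
    have hx : 0 < x := lt_trans (by positivity) hlt
    exact ⟨(le_one_div hx hj0).1 hle, (one_div_lt (by positivity) hx).1 hlt⟩

lemma branch_antitone_left (hy : 0 ≤ y) : Antitone fun n => branch n y := by
  intro m n hmn
  simp only [branch]
  gcongr

lemma branch_antitoneOn_right (n : ℕ) : AntitoneOn (branch n) (Ici 0) := by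
  intro x hx y _ hxy
  have hx0 : 0 ≤ x := hx
  unfold branch
  gcongr

lemma hasDerivAt_branch (n : ℕ) (hy : 0 ≤ y) :
    HasDerivAt (branch n) (-1 / ((n : ℝ) + 1 + y) ^ 2) y := by
  have hb : branch n = (fun z => (n : ℝ) + 1 + z)⁻¹ := by
    funext z; simp [branch]
  rw [hb]
  exact ((hasDerivAt_id' y).const_add ((n : ℝ) + 1)).inv (by positivity)

end Branches

section Weights

variable {x y : ℝ}

lemma weight_nonneg (n : ℕ) (hy : 0 ≤ y) : 0 ≤ weight n y := by
  unfold weight; positivity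

lemma sum_range_weight (N : ℕ) (hy : 0 ≤ y) :
    ∑ n ∈ Finset.range N, weight n y = 1 - (1 + y) / (N + (1 + y)) := by
  induction N with
  | zero => simp [div_self (by positivity : 1 + y ≠ 0)]
  | succ N ih =>
    rw [Finset.sum_range_succ, ih, weight]
    push_cast
    field_simp
    ring

lemma hasSum_weight (hy : 0 ≤ y) : HasSum (fun n => weight n y) 1 := by
  rw [hasSum_iff_tendsto_nat_of_nonneg fun n => weight_nonneg n hy]
  simp_rw [sum_range_weight _ hy]
  have htail : Tendsto (fun N : ℕ => (1 + y) / ((N : ℝ) + (1 + y))) atTop (𝓝 0) :=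
    tendsto_const_nhds.div_atTop
      (tendsto_atTop_add_const_right _ _ tendsto_natCast_atTop_atTop)
  simpa using htail.const_sub 1

lemma weight_one (n : ℕ) : weight n 1 = 2 * weight (n + 1) 0 := by
  unfold weight
  push_cast
  field_simp
  ring

lemma weight_zero_zero : weight 0 0 = 1 / 2 := by
  norm_num [weight]

lemma weight_sub_weight (n : ℕ) (hx : 0 ≤ x) (hy : 0 ≤ y) :
    weight n y - weight n x = (y - x) * (n * (n + 1) - (1 + x) * (1 + y)) /
      ((n + 1 + x) * (n + 2 + x) * ((n + 1 + y) * (n + 2 + y))) := by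
  unfold weight
  field_simp
  ring

lemma weight_zero_antitoneOn : AntitoneOn (weight 0) (Icc 0 1) := by
  intro x hx y hy hxy
  have hx0 := hx.1
  have hy0 := hy.1
  rw [← sub_nonpos, weight_sub_weight 0 hx0 hy0]
  refine div_nonpos_of_nonpos_of_nonneg
    (mul_nonpos_of_nonneg_of_nonpos (sub_nonneg.2 hxy) ?_) (by positivity)
  rw [Nat.cast_zero, zero_mul, zero_sub, neg_nonpos]
  positivity

lemma weight_monotoneOn {n : ℕ} (hn : 2 ≤ n) : MonotoneOn (weight n) (Icc 0 1) := by
  intro x hx y hy hxy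
  have hx0 := hx.1
  have hy0 := hy.1
  have hn' : (2 : ℝ) ≤ n := by exact_mod_cast hn
  rw [← sub_nonneg, weight_sub_weight n hx0 hy0]
  refine div_nonneg (mul_nonneg (sub_nonneg.2 hxy) (sub_nonneg.2 ?_)) (by positivity)
  calc (1 + x) * (1 + y) ≤ 2 * 3 := by
        gcongr <;> linarith [hx.2, hy.2]
    _ ≤ n * (n + 1) := by gcongr; linarith

end Weights

section GaussMeasure

lemma density_nonneg {x : ℝ} (hx : 0 ≤ x) : 0 ≤ density x := by
  have := Real.log_pos one_lt_two
  unfold density; positivity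

lemma ae_gaussMeasure_mem_Ico : ∀ᵐ x ∂gaussMeasure, x ∈ Ico (0 : ℝ) 1 :=
  (withDensity_absolutelyContinuous _ _).ae_le (ae_restrict_mem measurableSet_Ico)

lemma absolutelyContinuous_gaussMeasure : volume.restrict (Icc (0 : ℝ) 1) ≪ gaussMeasure := by
  rw [← restrict_Ico_eq_restrict_Icc]
  refine withDensity_absolutelyContinuous' measurable_density.ennreal_ofReal.aemeasurable ?_
  filter_upwards [ae_restrict_mem measurableSet_Ico] with x ⟨hx, _⟩
  have := Real.log_pos one_lt_two
  rw [Ne, ENNReal.ofReal_eq_zero, not_le, density]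
  positivity

lemma integral_density {a b : ℝ} (ha : 0 ≤ a) (hb : 0 ≤ b) :
    ∫ x in a..b, density x = Real.log ((1 + b) / (1 + a)) / Real.log 2 := by
  simp_rw [density, mul_inv]
  rw [intervalIntegral.integral_const_mul,
    intervalIntegral.integral_comp_add_left (fun x => x⁻¹) (1 : ℝ),
    integral_inv_of_pos (by positivity) (by positivity), inv_mul_eq_div]

lemma intervalIntegrable_density {a b : ℝ} (ha : 0 ≤ a) (hb : 0 ≤ b) :
    IntervalIntegrable density volume a b := by
  refine ContinuousOn.intervalIntegrable fun x hx => ContinuousAt.continuousWithinAt ?_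
  have hx0 : 0 ≤ x := (le_min ha hb).trans hx.1
  have := Real.log_pos one_lt_two
  unfold density
  fun_prop (disch := positivity)

lemma gaussMeasure_Ioc {a b : ℝ} (ha : 0 ≤ a) (hab : a ≤ b) (hb : b ≤ 1) :
    gaussMeasure (Ioc a b) = ENNReal.ofReal (Real.log ((1 + b) / (1 + a)) / Real.log 2) := by
  rw [gaussMeasure, restrict_Ico_eq_restrict_Ioc, withDensity_apply _ measurableSet_Ioc,
    Measure.restrict_restrict_of_subset (Ioc_subset_Ioc ha hb),
    ← integral_density ha (ha.trans hab), intervalIntegral.integral_of_le hab,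
    ofReal_integral_eq_lintegral_ofReal (intervalIntegrable_density ha (ha.trans hab)).1]
  filter_upwards [ae_restrict_mem measurableSet_Ioc] with x hx
  exact density_nonneg (ha.trans hx.1.le)

instance : IsProbabilityMeasure gaussMeasure := by
  have hIoc : gaussMeasure univ = gaussMeasure (Ioc 0 1) := by
    rw [gaussMeasure, restrict_Ico_eq_restrict_Ioc, withDensity_apply _ .univ,
      withDensity_apply _ measurableSet_Ioc, Measure.restrict_univ,
      Measure.restrict_restrict_of_subset Subset.rfl]
  rw [isProbabilityMeasure_iff, hIoc, gaussMeasure_Ioc le_rfl zero_le_one le_rfl]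
  norm_num

lemma gaussMeasure_real_firstDigitSet {j : ℕ} (hj : j ≠ 0) :
    gaussMeasure.real (firstDigitSet j) = (1 / Real.log 2) *
      (2 * Real.log (1 + (j : ℝ)) - Real.log (j : ℝ) - Real.log (2 + (j : ℝ))) := by
  have hj0 : (0 : ℝ) < j := by exact_mod_cast hj.bot_lt
  have hj1 : 1 / (j : ℝ) ≤ 1 := (div_le_one hj0).2 (by exact_mod_cast Nat.one_le_iff_ne_zero.2 hj)
  have hratio : (1 + 1 / (j : ℝ)) / (1 + 1 / ((j : ℝ) + 1)) = (1 + j) ^ 2 / (j * (2 + j)) := by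
    field_simp
    ring
  have hratio_ge : 1 ≤ (1 + (j : ℝ)) ^ 2 / (j * (2 + j)) := by
    rw [one_le_div (by positivity)]
    linarith
  rw [measureReal_def, firstDigitSet_eq_Ioc hj, gaussMeasure_Ioc (by positivity)
    (one_div_le_one_div_of_le hj0 (by linarith)) hj1, hratio, ENNReal.toReal_ofReal
    (div_nonneg (Real.log_nonneg hratio_ge) (Real.log_nonneg one_le_two)),
    Real.log_div (by positivity) (by positivity), Real.log_pow,
    Real.log_mul (by positivity) (by positivity)]
  push_cast
  ring

end GaussMeasure

section ReversedKernel

variable {y : ℝ}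

lemma ae_reversedKernel {p : ℝ → Prop} (h : ∀ n, p (branch n y)) :
    ∀ᵐ x ∂reversedKernel y, p x := by
  refine Measure.ae_sum_iff.2 fun n => Measure.ae_smul_measure ?_ _
  rw [ae_dirac_eq]
  exact h n

lemma lintegral_reversedKernel (F : ℝ → ENNReal) (y : ℝ) :
    ∫⁻ x, F x ∂reversedKernel y = ∑' n, ENNReal.ofReal (weight n y) * F (branch n y) := by
  simp_rw [reversedKernel_apply, lintegral_sum_measure, lintegral_smul_measure, lintegral_dirac,
    smul_eq_mul]

lemma isProbabilityMeasure_reversedKernel (hy : 0 ≤ y) :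
    IsProbabilityMeasure (reversedKernel y) := by
  rw [isProbabilityMeasure_iff, ← lintegral_one, lintegral_reversedKernel]
  simp_rw [mul_one]
  rw [← ENNReal.ofReal_tsum_of_nonneg (fun n => weight_nonneg n hy) (hasSum_weight hy).summable,
    (hasSum_weight hy).tsum_eq, ENNReal.ofReal_one]

lemma hasSum_integral_reversedKernel {f : ℝ → ℝ} (hy : 0 ≤ y)
    (hf : Integrable f (reversedKernel y)) :
    HasSum (fun n => weight n y * f (branch n y)) (∫ x, f x ∂reversedKernel y) := by
  have hsum := hasSum_integral_measure hf
  simp only [integral_smul_measure, integral_dirac, smul_eq_mul,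
    ENNReal.toReal_ofReal (weight_nonneg _ hy)] at hsum
  exact hsum

lemma abs_deriv_branch_mul_density (n : ℕ) (hy : 0 ≤ y) :
    |-1 / ((n : ℝ) + 1 + y) ^ 2| * density (branch n y) = density y * weight n y := by
  have := Real.log_pos one_lt_two
  rw [abs_div, abs_neg, abs_one, abs_of_nonneg (by positivity)]
  unfold density branch weight
  field_simp
  ring

lemma lintegral_gaussMeasure {F : ℝ → ENNReal} (hF : Measurable F) :
    ∫⁻ x, F x ∂gaussMeasure = ∫⁻ x in Ico 0 1, ENNReal.ofReal (density x) * F x :=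
  lintegral_withDensity_eq_lintegral_mul _ measurable_density.ennreal_ofReal hF

lemma setLIntegral_firstDigitSet_succ (n : ℕ) (F : ℝ → ENNReal) :
    ∫⁻ x in firstDigitSet (n + 1), ENNReal.ofReal (density x) * F x =
      ∫⁻ y in Ico 0 1,
        ENNReal.ofReal (density y) * (ENNReal.ofReal (weight n y) * F (branch n y)) := by
  rw [← image_branch, lintegral_image_eq_lintegral_abs_deriv_mul measurableSet_Ico
    (fun y hy => (hasDerivAt_branch n hy.1).hasDerivWithinAt)
    (LeftInvOn.injOn (f₁' := gaussMap) fun y hy => gaussMap_branch n hy)]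
  refine setLIntegral_congr_fun measurableSet_Ico fun y hy => ?_
  rw [← mul_assoc, ← mul_assoc, ← ENNReal.ofReal_mul (abs_nonneg _),
    ← ENNReal.ofReal_mul (density_nonneg hy.1), abs_deriv_branch_mul_density n hy.1]

theorem lintegral_lintegral_reversedKernel {F : ℝ → ENNReal} (hF : Measurable F) :
    ∫⁻ y, ∫⁻ x, F x ∂reversedKernel y ∂gaussMeasure = ∫⁻ x, F x ∂gaussMeasure := by
  have hterm (n : ℕ) : Measurable fun y =>
      ENNReal.ofReal (density y) * (ENNReal.ofReal (weight n y) * F (branch n y)) :=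
    measurable_density.ennreal_ofReal.mul
      ((measurable_weight n).ennreal_ofReal.mul (hF.comp (measurable_branch n)))
  calc ∫⁻ y, ∫⁻ x, F x ∂reversedKernel y ∂gaussMeasure
      = ∫⁻ y in Ico 0 1, ∑' n,
          ENNReal.ofReal (density y) * (ENNReal.ofReal (weight n y) * F (branch n y)) := by
        rw [lintegral_gaussMeasure hF.lintegral_kernel]
        simp_rw [lintegral_reversedKernel, ENNReal.tsum_mul_left]
    _ = ∑' n, ∫⁻ x in firstDigitSet (n + 1), ENNReal.ofReal (density x) * F x := by
        rw [lintegral_tsum fun n => (hterm n).aemeasurable]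
        simp_rw [setLIntegral_firstDigitSet_succ]
    _ = ∫⁻ x in Ioc 0 1, ENNReal.ofReal (density x) * F x := by
        rw [← iUnion_firstDigitSet_succ, lintegral_iUnion
          (fun n => measurableSet_firstDigitSet (n + 1))
          (pairwise_disjoint_firstDigitSet.comp_of_injective (add_left_injective 1))]
    _ = ∫⁻ x, F x ∂gaussMeasure := by
        rw [← restrict_Ico_eq_restrict_Ioc, lintegral_gaussMeasure hF]

theorem isTimeReversal_reversedKernel : IsTimeReversal reversedKernel gaussMap gaussMeasure where
  invariant := by
    refine Measure.ext_of_lintegral _ fun F hF => ?_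
    rw [Measure.lintegral_bind reversedKernel.aemeasurable hF.aemeasurable,
      lintegral_lintegral_reversedKernel hF]
  ae_isProbabilityMeasure := by
    filter_upwards [ae_gaussMeasure_mem_Ico] with y hy
    exact isProbabilityMeasure_reversedKernel hy.1
  ae_map_eq := by
    filter_upwards [ae_gaussMeasure_mem_Ico] with y hy
    exact ae_reversedKernel fun n => gaussMap_branch n hy

end ReversedKernel

section Contraction

lemma antitone_indicator_Iic_one (b : ℝ) : Antitone ((Iic b).indicator (1 : ℝ → ℝ)) := by
  intro x y hxy
  by_cases hy : y ∈ Iic b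
  · have hx : x ∈ Iic b := hxy.trans (mem_Iic.1 hy)
    rw [indicator_of_mem hx, indicator_of_mem hy, Pi.one_apply, Pi.one_apply]
  · rw [indicator_of_notMem hy]
    exact indicator_nonneg (fun _ _ => zero_le_one) x

variable {f : ℝ → ℝ}

lemma integrable_of_antitoneOn_of_ae_mem_Icc {ν : Measure ℝ} [IsFiniteMeasure ν] {a b : ℝ}
    (hν : ∀ᵐ x ∂ν, x ∈ Icc a b) (hf : AntitoneOn f (Icc a b)) : Integrable f ν := by
  rw [← Measure.restrict_eq_self_of_ae_mem hν]
  exact hf.integrableOn_isCompact isCompact_Icc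

lemma hasSum_integral_reversedKernel_of_antitoneOn (hf : AntitoneOn f (Icc 0 1)) {y : ℝ}
    (hy : 0 ≤ y) :
    HasSum (fun n => weight n y * f (branch n y)) (∫ x, f x ∂reversedKernel y) :=
  have := isProbabilityMeasure_reversedKernel hy
  hasSum_integral_reversedKernel hy
    (integrable_of_antitoneOn_of_ae_mem_Icc (ae_reversedKernel fun n => branch_mem_Icc n hy) hf)

-- The value at `n = 1` is the pivot because the first factor changes sign only around `n = 1`.
-- Subtracting it is free in the sum over `n`, as the weights at `x` and at `y` have the same total.
lemma weight_sub_weight_mul_nonneg {x y : ℝ} (hx : x ∈ Icc (0 : ℝ) 1) (hy : y ∈ Icc (0 : ℝ) 1)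
    (hxy : x ≤ y) {g : ℕ → ℝ} (hg : Monotone g) (n : ℕ) :
    0 ≤ (weight n y - weight n x) * (g n - g 1) := by
  match n with
  | 0 =>
    exact mul_nonneg_of_nonpos_of_nonpos
      (sub_nonpos.2 (weight_zero_antitoneOn hx hy hxy)) (sub_nonpos.2 (hg zero_le_one))
  | 1 => rw [sub_self, mul_zero]
  | n + 2 =>
    exact mul_nonneg
      (sub_nonneg.2 (weight_monotoneOn (Nat.le_add_left 2 n) hx hy hxy))
      (sub_nonneg.2 (hg (Nat.le_add_left 1 (n + 1))))

theorem monotoneOn_integral_reversedKernel (hf : AntitoneOn f (Icc 0 1)) :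
    MonotoneOn (fun y => ∫ x, f x ∂reversedKernel y) (Icc 0 1) := by
  intro x hx y hy hxy
  set g : ℕ → ℝ := fun n => f (branch n y)
  have hg : Monotone g := fun m n hmn =>
    hf (branch_mem_Icc n hy.1) (branch_mem_Icc m hy.1) (branch_antitone_left hy.1 hmn)
  have hfg (n : ℕ) : f (branch n x) ≤ g n :=
    hf (branch_mem_Icc n hy.1) (branch_mem_Icc n hx.1)
      (branch_antitoneOn_right n hx.1 hy.1 hxy)
  have hweight : HasSum (fun n => (weight n y - weight n x) * g 1) 0 := by
    simpa using ((hasSum_weight hy.1).sub (hasSum_weight hx.1)).mul_right (g 1)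
  have hdiff := ((hasSum_integral_reversedKernel_of_antitoneOn hf hy.1).sub
    (hasSum_integral_reversedKernel_of_antitoneOn hf hx.1)).sub hweight
  rw [sub_zero] at hdiff
  refine sub_nonneg.1 (hdiff.nonneg fun n => ?_)
  calc 0 ≤ (weight n y - weight n x) * (g n - g 1) + weight n x * (g n - f (branch n x)) :=
        add_nonneg (weight_sub_weight_mul_nonneg hx hy hxy hg n)
          (mul_nonneg (weight_nonneg n hx.1) (sub_nonneg.2 (hfg n)))
    _ = weight n y * g n - weight n x * f (branch n x) - (weight n y - weight n x) * g 1 := by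
        ring

lemma integral_reversedKernel_one (hf : AntitoneOn f (Icc 0 1)) :
    ∫ x, f x ∂reversedKernel 1 = 2 * ∫ x, f x ∂reversedKernel 0 - f 1 := by
  have htail := ((hasSum_nat_add_iff' 1).2
    (hasSum_integral_reversedKernel_of_antitoneOn hf le_rfl)).mul_left 2
  have hbranch (n : ℕ) : branch (n + 1) 0 = branch n 1 := by simp [branch]
  have hbranch_zero : branch 0 0 = 1 := by simp [branch]
  simp only [← mul_assoc, ← weight_one, hbranch, Finset.sum_range_one, weight_zero_zero,
    hbranch_zero] at htail
  rw [(hasSum_integral_reversedKernel_of_antitoneOn hf zero_le_one).unique htail]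
  ring

lemma integral_mem_Icc_of_antitoneOn {ν : Measure ℝ} [IsProbabilityMeasure ν]
    (hν : ∀ᵐ x ∂ν, x ∈ Icc (0 : ℝ) 1) (hf : AntitoneOn f (Icc 0 1)) :
    ∫ x, f x ∂ν ∈ Icc (f 1) (f 0) := by
  refine (convex_Icc (f 1) (f 0)).integral_mem isClosed_Icc ?_
    (integrable_of_antitoneOn_of_ae_mem_Icc hν hf)
  filter_upwards [hν] with x hx
  exact ⟨hf hx (right_mem_Icc.2 zero_le_one) hx.2, hf (left_mem_Icc.2 zero_le_one) hx hx.1⟩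

lemma integral_reversedKernel_one_sub_zero_le (hf : AntitoneOn f (Icc 0 1)) :
    ∫ x, f x ∂reversedKernel 1 - ∫ x, f x ∂reversedKernel 0 ≤ (f 0 - f 1) / 2 := by
  have := isProbabilityMeasure_reversedKernel zero_le_one
  have hle : ∫ x, f x ∂reversedKernel 1 ≤ f 0 :=
    (integral_mem_Icc_of_antitoneOn (ae_reversedKernel fun n => branch_mem_Icc n zero_le_one) hf).2
  linarith [integral_reversedKernel_one hf]

variable {ν₁ ν₂ : Measure ℝ} [IsProbabilityMeasure ν₁] [IsProbabilityMeasure ν₂]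

lemma abs_integral_sub_integral_le_of_invariant (hν₁ : ∀ᵐ x ∂ν₁, x ∈ Icc (0 : ℝ) 1)
    (hν₂ : ∀ᵐ x ∂ν₂, x ∈ Icc (0 : ℝ) 1) (hinv₁ : reversedKernel.Invariant ν₁)
    (hinv₂ : reversedKernel.Invariant ν₂) (k : ℕ) (hf : AntitoneOn f (Icc 0 1)) :
    |∫ x, f x ∂ν₁ - ∫ x, f x ∂ν₂| ≤ (f 0 - f 1) / 2 ^ k := by
  induction k generalizing f with
  | zero =>
    obtain ⟨hge₁, hle₁⟩ := integral_mem_Icc_of_antitoneOn hν₁ hf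
    obtain ⟨hge₂, hle₂⟩ := integral_mem_Icc_of_antitoneOn hν₂ hf
    rw [pow_zero, div_one, abs_le]
    constructor <;> linarith
  | succ k ih =>
    have hstep := ih (monotoneOn_integral_reversedKernel hf).neg
    simp only [integral_neg] at hstep
    rw [integral_integral_of_invariant hinv₁ (integrable_of_antitoneOn_of_ae_mem_Icc hν₁ hf),
      integral_integral_of_invariant hinv₂ (integrable_of_antitoneOn_of_ae_mem_Icc hν₂ hf),
      neg_sub_neg, neg_sub_neg, abs_sub_comm] at hstep
    rw [pow_succ', ← div_div]
    exact hstep.trans (by gcongr; exact integral_reversedKernel_one_sub_zero_le hf)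

theorem eq_of_invariant_reversedKernel (hν₁ : ∀ᵐ x ∂ν₁, x ∈ Icc (0 : ℝ) 1)
    (hν₂ : ∀ᵐ x ∂ν₂, x ∈ Icc (0 : ℝ) 1) (hinv₁ : reversedKernel.Invariant ν₁)
    (hinv₂ : reversedKernel.Invariant ν₂) : ν₁ = ν₂ := by
  have hintegral {f : ℝ → ℝ} (hf : AntitoneOn f (Icc 0 1)) : ∫ x, f x ∂ν₁ = ∫ x, f x ∂ν₂ := by
    have hlim : Tendsto (fun k : ℕ => (f 0 - f 1) / 2 ^ k) atTop (𝓝 0) :=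
      tendsto_const_nhds.div_atTop (tendsto_pow_atTop_atTop_of_one_lt one_lt_two)
    refine sub_eq_zero.1 (abs_nonpos_iff.1 (ge_of_tendsto' hlim fun k => ?_))
    exact abs_integral_sub_integral_le_of_invariant hν₁ hν₂ hinv₁ hinv₂ k hf
  refine Measure.ext_of_Iic _ _ fun b => ?_
  rw [← measureReal_eq_measureReal_iff, ← integral_indicator_one measurableSet_Iic,
    ← integral_indicator_one measurableSet_Iic,
    hintegral ((antitone_indicator_Iic_one b).antitoneOn _)]

end Contraction

theorem ergodic_gaussMap : Ergodic gaussMap gaussMeasure := by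
  have hmem : ∀ᵐ x ∂gaussMeasure, x ∈ Icc (0 : ℝ) 1 :=
    ae_gaussMeasure_mem_Ico.mono fun x hx => Ico_subset_Icc_self hx
  refine isTimeReversal_reversedKernel.ergodic measurable_gaussMap fun ν _ hac hν => ?_
  exact eq_of_invariant_reversedKernel (hac.ae_le hmem) hmem hν
    isTimeReversal_reversedKernel.invariant

lemma card_filter_digit_eq_birkhoffSum (j n : ℕ) (x : ℝ) :
    (((Finset.Icc 1 n).filter fun k => ⌊1 / (gaussMap^[k - 1] x)⌋ = (j : ℤ)).card : ℝ) =
      birkhoffSum gaussMap ((firstDigitSet j).indicator 1) n x := by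
  rw [Finset.card_filter, Nat.cast_sum]
  induction n with
  | zero => rfl
  | succ n ih =>
    rw [Finset.sum_Icc_succ_top (Nat.le_add_left 1 n), ih, birkhoffSum_succ, Nat.add_sub_cancel]
    by_cases hn : gaussMap^[n] x ∈ firstDigitSet j
    · rw [indicator_of_mem hn, if_pos (mem_firstDigitSet.1 hn), Nat.cast_one, Pi.one_apply]
    · rw [indicator_of_notMem hn, if_neg (mt mem_firstDigitSet.2 hn), Nat.cast_zero]

end GaussMap

/-- For Lebesgue-almost every `α ∈ [0,1]`, the asymptotic frequency of the digit `j`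
in the regular continued fraction expansion of `α` equals
`(1/log 2)·(2·log(1+j) − log j − log(2+j))`.  Here the `k`-th digit is
`a_k(α) = ⌊1/T_G^{k−1}(α)⌋`. -/
theorem digit_frequency (j : ℕ) (hj : 1 ≤ j) :
    ∀ᵐ α ∂(MeasureTheory.volume.restrict (Set.Icc (0 : ℝ) 1)),
      Filter.Tendsto
        (fun n : ℕ =>
          (((Finset.Icc 1 n).filter
              (fun k => ⌊1 / (gaussMap^[k - 1] α)⌋ = (j : ℤ))).card : ℝ) / (n : ℝ))
        Filter.atTop
        (nhds ((1 / Real.log 2) *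
          (2 * Real.log (1 + (j : ℝ)) - Real.log (j : ℝ) - Real.log (2 + (j : ℝ))))) := by
  have hmeas := GaussMap.measurableSet_firstDigitSet j
  have hint : Integrable ((GaussMap.firstDigitSet j).indicator (1 : ℝ → ℝ))
      GaussMap.gaussMeasure := (integrable_const 1).indicator hmeas
  filter_upwards [GaussMap.absolutelyContinuous_gaussMeasure.ae_le
    (ae_tendsto_birkhoffAverage_of_ergodic GaussMap.ergodic_gaussMap hint)] with x hx
  rw [integral_indicator_one hmeas,
    GaussMap.gaussMeasure_real_firstDigitSet (Nat.one_le_iff_ne_zero.1 hj)] at hx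
  simpa only [GaussMap.card_filter_digit_eq_birkhoffSum, birkhoffAverage, smul_eq_mul,
    inv_mul_eq_div] using hx
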